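/- Let W♮ ∈ ℝ^{L×K} with rank(W♮) = K, and let F♮ ∈ ℝ^{K×N} be entrywise nonnegative with every column summing to 1, rank(F♮) = K, and F♮ satisfying the SSC. Set P = W♮·F♮. Call a pair (W,F) feasible if W ∈ ℝ^{L×K}, F ∈ ℝ^{K×N}, F is entrywise nonnegative with every column summing to 1, and W·F = P. If (W*,F*) is feasible and det(F*·(F*)^T) ≥ det(F·F^T) for every feasible (W,F), then there exists a permutation matrix Π ∈ ℝ^{K×K} such that W* = W♮·Π and F* = Π^T·F♮. -/

import Mathlib

open Matrix BigOperators

/-- Euclidean norm of a real vector. -/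
noncomputable def l2norm {m : Type*} [Fintype m] (x : m → ℝ) : ℝ :=
  Real.sqrt (∑ i, (x i) ^ 2)

/-- `P` is a permutation matrix. -/
def IsPermMatrix {K : ℕ} (P : Matrix (Fin K) (Fin K) ℝ) : Prop :=
  ∃ σ : Equiv.Perm (Fin K), ∀ i j, P i j = if σ i = j then 1 else 0

/-- The conic hull of the columns of `H`. -/
def coneOf {K : ℕ} {J : Type*} [Fintype J] (H : Matrix (Fin K) J ℝ) : Set (Fin K → ℝ) :=
  {x | ∃ θ : J → ℝ, (∀ j, 0 ≤ θ j) ∧ x = H.mulVec θ}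

/-- The second-order cone `C = {x : √(K-1) ‖x‖₂ ≤ ∑ᵢ xᵢ}`. -/
def socC (K : ℕ) : Set (Fin K → ℝ) :=
  {x | Real.sqrt ((K : ℝ) - 1) * l2norm x ≤ ∑ i, x i}

/-- The sufficiently scattered condition. -/
def SSC {K : ℕ} {J : Type*} [Fintype J] (H : Matrix (Fin K) J ℝ) : Prop :=
  socC K ⊆ coneOf H ∧
  ∀ Q : Matrix (Fin K) (Fin K) ℝ, Qᵀ * Q = 1 → ¬ IsPermMatrix Q → ¬ (coneOf H ⊆ coneOf Q)

theorem aux_rinv {K N : ℕ} (M : Matrix (Fin K) (Fin N) ℝ) (h : M.rank = K) :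
    ∃ R : Matrix (Fin N) (Fin K) ℝ, M * R = 1 := by
  rw [← Matrix.mulVec_surjective_iff_exists_right_inverse]
  have h1 : LinearMap.range M.mulVecLin = ⊤ := by
    apply Submodule.eq_top_of_finrank_eq
    have h2 : Module.finrank ℝ (LinearMap.range M.mulVecLin) = K := h
    rw [h2]; simp
  exact LinearMap.range_eq_top.mp h1

theorem aux_amgm {K : ℕ} (x : Fin K → ℝ) (hx : ∀ i, 0 < x i) (hs : ∑ i, x i ≤ K)
    (hp : 1 ≤ ∏ i, x i) : ∀ i, x i = 1 := by
  have hl : 0 ≤ ∑ i, Real.log (x i) := by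
    rw [← Real.log_prod (fun i _ => (hx i).ne')]
    exact Real.log_nonneg hp
  have hnn : ∀ i ∈ Finset.univ, 0 ≤ x i - 1 - Real.log (x i) := fun i _ => by
    linarith [Real.log_le_sub_one_of_pos (hx i)]
  have hz : ∑ i, (x i - 1 - Real.log (x i)) = 0 := by
    apply le_antisymm _ (Finset.sum_nonneg hnn)
    simp only [Finset.sum_sub_distrib, Finset.sum_const, Finset.card_univ, Fintype.card_fin,
      nsmul_eq_mul, mul_one]
    linarith
  intro i
  by_contra hne
  have h1 := (Finset.sum_eq_zero_iff_of_nonneg hnn).1 hz i (Finset.mem_univ i)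
  linarith [Real.log_lt_sub_one_of_pos (hx i) hne]

theorem aux_orth {K : ℕ} (M : Matrix (Fin K) (Fin K) ℝ) (ht : (M * Mᵀ).trace ≤ K)
    (hd : 1 ≤ (M * Mᵀ).det) : M * Mᵀ = 1 := by
  have hps : (M * Mᵀ).PosSemidef := by
    simpa using Matrix.posSemidef_self_mul_conjTranspose M
  have hH := hps.1
  have hdet := hH.det_eq_prod_eigenvalues
  have htr := hH.trace_eq_sum_eigenvalues
  simp only [RCLike.ofReal_real_eq_id, id] at hdet htr
  have hpos : ∀ i, 0 < hH.eigenvalues i := by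
    intro i
    refine lt_of_le_of_ne (hps.eigenvalues_nonneg i) fun h => ?_
    rw [hdet, Finset.prod_eq_zero (Finset.mem_univ i) h.symm] at hd
    linarith
  have h1 := aux_amgm _ hpos (htr ▸ ht) (hdet ▸ hd)
  have h2 : hH.eigenvalues = fun _ => 1 := funext h1
  have h3 := hH.spectral_theorem
  rw [h2] at h3
  rw [h3]
  have : (RCLike.ofReal ∘ (fun _ : Fin K => (1:ℝ)) : Fin K → ℝ) = fun _ => 1 := by
    ext; simp
  rw [this, Matrix.diagonal_one, map_one]

theorem aux_dual {K : ℕ} (b : Fin K → ℝ) (h : ∀ x ∈ socC K, 0 ≤ ∑ i, b i * x i) :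
    0 ≤ ∑ i, b i ∧ ∑ i, b i ^ 2 ≤ (∑ i, b i) ^ 2 := by
  rcases Nat.eq_zero_or_pos K with rfl | hK
  · simp
  have hK1 : (1:ℝ) ≤ K := by exact_mod_cast hK
  have hK0 : (0:ℝ) < K := by linarith
  have key : ∀ t c : ℝ, 0 ≤ t →
      (K - 1) * (c ^ 2 * (∑ i, b i ^ 2 - (∑ i, b i) ^ 2 / K)) ≤ t ^ 2 * K →
      0 ≤ t * (∑ i, b i) - c * (∑ i, b i ^ 2 - (∑ i, b i) ^ 2 / K) := by
    intro t c ht hc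
    set s := ∑ i, b i with hs
    set q := ∑ i, b i ^ 2 with hq
    have e1 : ∑ i, (t - c * (b i - s / K)) = t * K := by
      simp only [Finset.sum_sub_distrib, ← Finset.mul_sum, Finset.sum_const, Finset.card_univ,
        Fintype.card_fin, nsmul_eq_mul, ← hs]
      field_simp
      ring
    have e2 : ∑ i, (t - c * (b i - s / K)) ^ 2 = t ^ 2 * K + c ^ 2 * (q - s ^ 2 / K) := by
      have : ∀ i, (t - c * (b i - s / K)) ^ 2 =
          (t + c * s / K) ^ 2 - (2 * c * (t + c * s / K)) * b i + c ^ 2 * b i ^ 2 := by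
        intro i; ring
      simp only [this, Finset.sum_add_distrib, Finset.sum_sub_distrib, ← Finset.mul_sum,
        Finset.sum_const, Finset.card_univ, Fintype.card_fin, nsmul_eq_mul, ← hs, ← hq]
      field_simp
      ring
    have e3 : ∑ i, b i * (t - c * (b i - s / K)) = t * s - c * (q - s ^ 2 / K) := by
      have : ∀ i, b i * (t - c * (b i - s / K)) = (t + c * s / K) * b i - c * b i ^ 2 := by
        intro i; ring
      simp only [this, Finset.sum_sub_distrib, ← Finset.mul_sum, ← hs, ← hq]
      ring
    rw [← e3]
    apply h
    show Real.sqrt ((K : ℝ) - 1) * Real.sqrt _ ≤ _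
    rw [e1, e2, ← Real.sqrt_mul (by linarith)]
    apply Real.sqrt_le_iff.2 ⟨by positivity, ?_⟩
    nlinarith
  set s := ∑ i, b i with hs
  set q := ∑ i, b i ^ 2 with hq
  have hs0 : 0 ≤ s := by
    have := key 1 0 (by norm_num) (by simp)
    simpa using this
  refine ⟨hs0, ?_⟩
  have hr0 : 0 ≤ q - s ^ 2 / K := by
    have := sq_sum_le_card_mul_sum_sq (s := Finset.univ) (f := b)
    simp only [Finset.card_univ, Fintype.card_fin, ← hs, ← hq] at this
    rw [sub_nonneg, div_le_iff₀ hK0]; linarith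
  set v := q - s ^ 2 / K with hv
  have hsv := Real.sq_sqrt hr0
  have hsK := Real.sq_sqrt hK0.le
  have hsK1 := Real.sq_sqrt (show (0:ℝ) ≤ K - 1 by linarith)
  have := key (√(K - 1) * √v) √K (by positivity) (by
    rw [mul_pow, hsv, hsK, hsK1]; nlinarith)
  have hmain : K * v ≤ (K - 1) * s ^ 2 := by
    rcases hr0.eq_or_lt with h0 | h0
    · rw [← h0]; simp; nlinarith [sq_nonneg s]
    · have hp : 0 < √v := Real.sqrt_pos.2 h0
      have h1 : √K * √v ≤ √(K - 1) * s := by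
        have : √v * (√K * √v) ≤ √v * (√(K - 1) * s) := by
          have e : √v * (√K * √v) = √K * v := by
            calc √v * (√K * √v) = √K * √v ^ 2 := by ring
              _ = √K * v := by rw [hsv]
          rw [e]; linarith
        exact le_of_mul_le_mul_left this hp
      have h2 := pow_le_pow_left₀ (by positivity) h1 2
      rwa [mul_pow, mul_pow, hsv, hsK, hsK1] at h2
  have : K * v = K * q - s ^ 2 := by rw [hv]; field_simp
  have h3 : K * q ≤ K * s ^ 2 := by linarith
  exact le_of_mul_le_mul_left h3 hK0

theorem stmt7 {L N K : ℕ}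
    (Wn : Matrix (Fin L) (Fin K) ℝ) (Fn : Matrix (Fin K) (Fin N) ℝ)
    (hWrank : Wn.rank = K)
    (hFn0 : ∀ k n, 0 ≤ Fn k n) (hFn1 : ∀ n, ∑ k, Fn k n = 1)
    (hFnrank : Fn.rank = K) (hFnssc : SSC Fn)
    (Wstar : Matrix (Fin L) (Fin K) ℝ) (Fstar : Matrix (Fin K) (Fin N) ℝ)
    (hFstar0 : ∀ k n, 0 ≤ Fstar k n) (hFstar1 : ∀ n, ∑ k, Fstar k n = 1)
    (hfeas : Wstar * Fstar = Wn * Fn)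
    (hopt : ∀ (W : Matrix (Fin L) (Fin K) ℝ) (F : Matrix (Fin K) (Fin N) ℝ),
      (∀ k n, 0 ≤ F k n) → (∀ n, ∑ k, F k n = 1) → W * F = Wn * Fn →
      (F * Fᵀ).det ≤ (Fstar * Fstarᵀ).det) :
    ∃ Pm : Matrix (Fin K) (Fin K) ℝ,
      IsPermMatrix Pm ∧ Wstar = Wn * Pm ∧ Fstar = Pmᵀ * Fn := by
  obtain ⟨R, hR⟩ := aux_rinv Fn hFnrank
  obtain ⟨Gt, hGt⟩ := aux_rinv Wnᵀ (by rw [Matrix.rank_transpose, hWrank])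
  have hG : Gtᵀ * Wn = 1 := by
    have := congrArg Matrix.transpose hGt
    simpa [Matrix.transpose_mul] using this
  have hA : (Gtᵀ * Wstar) * Fstar = Fn := by
    rw [Matrix.mul_assoc, hfeas, ← Matrix.mul_assoc, hG, Matrix.one_mul]
  have hAB : (Gtᵀ * Wstar) * (Fstar * R) = 1 := by
    rw [← Matrix.mul_assoc, hA, hR]
  have hBA := mul_eq_one_comm.1 hAB
  obtain ⟨B, hBdef⟩ : ∃ B, B = Fstar * R := ⟨_, rfl⟩
  rw [← hBdef] at hBA
  have hB : Fstar = B * Fn := by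
    rw [← hA, ← Matrix.mul_assoc, hBA, Matrix.one_mul]
  have hmv : ∀ θ : Fin N → ℝ, (∀ j, 0 ≤ θ j) → ∀ k, 0 ≤ (Fstar *ᵥ θ) k := by
    intro θ hθ k
    simp only [Matrix.mulVec, dotProduct]
    exact Finset.sum_nonneg fun j _ => mul_nonneg (hFstar0 k j) (hθ j)
  -- column sums of B
  have hcol : ∀ j, ∑ k, B k j = 1 := by
    have h1 : (fun _ => 1) ᵥ* B = (fun _ => (1:ℝ)) := by
      have h2 : (fun _ => (1:ℝ)) ᵥ* Fstar = fun _ => 1 := by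
        ext n; simp [Matrix.vecMul, dotProduct, hFstar1]
      have h3 : (fun _ => (1:ℝ)) ᵥ* Fn = fun _ => 1 := by
        ext n; simp [Matrix.vecMul, dotProduct, hFn1]
      rw [hBdef, ← Matrix.vecMul_vecMul, h2, ← h3, Matrix.vecMul_vecMul, hR, Matrix.vecMul_one]
    intro j
    have := congrFun h1 j
    simpa [Matrix.vecMul, dotProduct] using this
  -- rows of B lie in the dual cone
  have hdual : ∀ k, 0 ≤ ∑ i, B k i ∧ ∑ i, B k i ^ 2 ≤ (∑ i, B k i) ^ 2 := by
    intro k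
    apply aux_dual
    intro x hx
    obtain ⟨θ, hθ, rfl⟩ := hFnssc.1 hx
    have : ∑ i, B k i * (Fn *ᵥ θ) i = (Fstar *ᵥ θ) k := by
      rw [hB, ← Matrix.mulVec_mulVec]; rfl
    rw [this]
    exact hmv θ hθ k
  have hpd : 0 < (Fn * Fnᵀ).det := by
    have h0 : (Fn * Fnᵀ).PosSemidef := by
      simpa using Matrix.posSemidef_self_mul_conjTranspose Fn
    refine lt_of_le_of_ne h0.det_nonneg fun h => ?_
    obtain ⟨S, hS⟩ := aux_rinv (Fn * Fnᵀ) (by rw [Matrix.rank_self_mul_transpose, hFnrank])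
    have := congrArg Matrix.det hS
    rw [Matrix.det_mul, ← h] at this
    simp at this
  have hdetB : 1 ≤ B.det ^ 2 := by
    have h1 := hopt Wn Fn hFn0 hFn1 rfl
    have h2 : (Fstar * Fstarᵀ).det = B.det ^ 2 * (Fn * Fnᵀ).det := by
      rw [hB, Matrix.transpose_mul,
        show B * Fn * (Fnᵀ * Bᵀ) = B * (Fn * Fnᵀ) * Bᵀ by simp only [Matrix.mul_assoc],
        Matrix.det_mul, Matrix.det_mul, Matrix.det_transpose]
      ring
    rw [h2] at h1
    nlinarith
  obtain ⟨s, hs⟩ : ∃ s : Fin K → ℝ, s = fun k => ∑ i, B k i := ⟨_, rfl⟩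
  have hspos : ∀ k, 0 < s k := by
    intro k
    have hk := hdual k
    rw [hs]
    show 0 < ∑ i, B k i
    refine lt_of_le_of_ne hk.1 fun h => ?_
    rw [← h] at hk
    have h2 : ∑ i, B k i ^ 2 = 0 :=
      le_antisymm (by simpa using hk.2) (Finset.sum_nonneg fun i _ => sq_nonneg _)
    have h3 := (Finset.sum_eq_zero_iff_of_nonneg (fun i _ => sq_nonneg (B k i))).1 h2
    have h4 : B.det = 0 := Matrix.det_eq_zero_of_row_eq_zero k fun j => by
      simpa using h3 j (Finset.mem_univ j)
    rw [h4] at hdetB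
    norm_num at hdetB
  have hssum : ∑ k, s k = K := by
    simp only [hs]
    calc ∑ k, ∑ i, B k i = ∑ i, ∑ k, B k i :=
          Finset.sum_comm (f := fun k i => B k i)
      _ = ∑ i : Fin K, (1:ℝ) := Finset.sum_congr rfl fun i _ => hcol i
      _ = K := by simp
  have hBrow : ∀ k, ∑ i, B k i ^ 2 ≤ s k ^ 2 := fun k => by rw [hs]; exact (hdual k).2
  obtain ⟨M, hM⟩ : ∃ M : Matrix (Fin K) (Fin K) ℝ, M = Matrix.diagonal (fun k => (s k)⁻¹) * B :=
    ⟨_, rfl⟩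
  have hBM : B = Matrix.diagonal s * M := by
    rw [hM, ← Matrix.mul_assoc, Matrix.diagonal_mul_diagonal]
    have : (fun i => s i * (s i)⁻¹) = fun _ => 1 := by
      ext i; exact mul_inv_cancel₀ (hspos i).ne'
    rw [this, Matrix.diagonal_one, Matrix.one_mul]
  have hdB : B.det = (∏ k, s k) * M.det := by
    conv_lhs => rw [hBM]
    rw [Matrix.det_mul, Matrix.det_diagonal]
  have hMtr : (M * Mᵀ).trace ≤ K := by
    have : ∀ k, (M * Mᵀ) k k ≤ 1 := by
      intro k
      have h1 : (M * Mᵀ) k k = (s k ^ 2)⁻¹ * ∑ i, B k i ^ 2 := by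
        rw [Matrix.mul_apply, Finset.mul_sum]
        apply Finset.sum_congr rfl
        intro i _
        rw [Matrix.transpose_apply, hM, Matrix.diagonal_mul]
        ring
      rw [h1, inv_mul_le_iff₀ (by have := hspos k; positivity), mul_one]
      exact hBrow k
    calc (M * Mᵀ).trace = ∑ k, (M * Mᵀ) k k := rfl
      _ ≤ ∑ k : Fin K, (1:ℝ) := Finset.sum_le_sum fun k _ => this k
      _ = K := by simp
  have hprod : ∏ k, s k ≤ 1 := by
    by_contra hlt
    have := aux_amgm s hspos hssum.le (not_le.1 hlt).le
    apply hlt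
    simp [this]
  have hprodpos : 0 < ∏ k, s k := Finset.prod_pos fun k _ => hspos k
  have hMdet : 1 ≤ (M * Mᵀ).det := by
    rw [Matrix.det_mul, Matrix.det_transpose]
    rw [hdB, mul_pow] at hdetB
    have : (∏ k, s k) ^ 2 ≤ 1 := pow_le_one₀ hprodpos.le hprod
    nlinarith [sq_nonneg M.det]
  have hMo := aux_orth M hMtr hMdet
  have hs1 : ∀ k, s k = 1 := by
    apply aux_amgm s hspos hssum.le
    have h1 : M.det ^ 2 = 1 := by
      have := congrArg Matrix.det hMo
      rw [Matrix.det_mul, Matrix.det_transpose, Matrix.det_one] at this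
      linarith [sq M.det]
    rw [hdB, mul_pow, h1] at hdetB
    nlinarith
  have hBo : B * Bᵀ = 1 := by
    have : B = M := by
      rw [hBM, show s = fun _ => 1 from funext hs1, Matrix.diagonal_one, Matrix.one_mul]
    rw [this, hMo]
  have hBoT := mul_eq_one_comm.1 hBo
  refine ⟨Bᵀ, ?_, ?_, ?_⟩
  · by_contra hnp
    apply hFnssc.2 Bᵀ (by rw [Matrix.transpose_transpose, hBo]) hnp
    rintro x ⟨θ, hθ, rfl⟩
    refine ⟨Fstar *ᵥ θ, hmv θ hθ, ?_⟩
    rw [Matrix.mulVec_mulVec, hB, ← Matrix.mul_assoc, hBoT, Matrix.one_mul]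
  · have h1 : Wstar * B = Wn := by
      have := congrArg (· * R) hfeas
      simp only [Matrix.mul_assoc] at this
      rwa [← hBdef, hR, Matrix.mul_one] at this
    rw [← h1, Matrix.mul_assoc, hBo, Matrix.mul_one]
  · rw [Matrix.transpose_transpose, hB]
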